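/- arXiv:2511.10058 — 6 statements merged into one kernel-verified Lean document; each statement's English description precedes it below -/
import Mathlib

section
/- Let a ≤ b be real numbers and define φ : ℝ → ℝ by φ(t) = max(a, min(b, t)) and g : ℝ → ℝ by g(t) = 1 if a < t < b and g(t) = 0 otherwise. Then for every t ∈ ℝ, the quotient |φ(t + h) − φ(t) − g(t + h)·h| / |h| tends to 0 as h → 0 (h ≠ 0). -/
open Filter Topology

/-- Points near `t` lie on the same side of `c` as `t` does, when `t ≠ c`. -/
lemma eventually_same_side (t c : ℝ) :
    ∀ᶠ h in 𝓝 (0 : ℝ), (c < t → c < t + h) ∧ (t < c → t + h < c) := by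
  have hcont : Tendsto (fun h : ℝ => t + h) (𝓝 0) (𝓝 t) := by
    simpa using (continuous_const_add t).tendsto 0
  have h₁ : ∀ᶠ h in 𝓝 (0 : ℝ), c < t → c < t + h :=
    eventually_imp_distrib_left.2 fun hc => hcont.eventually_const_lt hc
  have h₂ : ∀ᶠ h in 𝓝 (0 : ℝ), t < c → t + h < c :=
    eventually_imp_distrib_left.2 fun hc => hcont.eventually_lt_const hc
  exact h₁.and h₂

/-- Slant differentiability of the clamp function (Definition 3.1): the
projection `φ(t) = max(a, min(b, t))` is slantly differentiable on `ℝ` with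
slanting function `g(t) = 1` on `(a, b)` and `0` otherwise. -/
theorem clamp_slantly_differentiable
    (a b : ℝ) (hab : a ≤ b) (t : ℝ) :
    Tendsto
      (fun h : ℝ =>
        |max a (min b (t + h)) - max a (min b t) -
          (if a < t + h ∧ t + h < b then (1 : ℝ) else 0) * h| / |h|)
      (𝓝[≠] 0) (𝓝 0) := by
  -- The clamp is piecewise affine and its slope is sampled at `t + h`, on the piece reached from
  -- `t`; for small `h` that piece has `t` in its closure, so the numerator vanishes exactly.
  refine tendsto_const_nhds.congr' ?_
  filter_upwards [nhdsWithin_le_nhds (eventually_same_side t a),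
    nhdsWithin_le_nhds (eventually_same_side t b)] with h ⟨ha₁, ha₂⟩ ⟨hb₁, hb₂⟩
  have key : max a (min b (t + h)) - max a (min b t) -
      (if a < t + h ∧ t + h < b then (1 : ℝ) else 0) * h = 0 := by
    split_ifs with hin
    · have hat : a ≤ t := not_lt.1 fun hlt => (ha₂ hlt).not_gt hin.1
      have htb : t ≤ b := not_lt.1 fun hlt => (hb₁ hlt).not_gt hin.2
      rw [min_eq_right hin.2.le, max_eq_right hin.1.le, min_eq_right htb, max_eq_right hat]
      ring
    · rw [zero_mul, sub_zero, sub_eq_zero]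
      by_cases hat : a < t + h
      · have hbh : b ≤ t + h := not_lt.1 fun hlt => hin ⟨hat, hlt⟩
        have hbt : b ≤ t := not_lt.1 fun hlt => (hb₂ hlt).not_ge hbh
        rw [min_eq_left hbh, min_eq_left hbt]
      · have hta : t ≤ a := not_lt.1 fun hlt => hat (ha₁ hlt)
        rw [max_eq_left ((min_le_right _ _).trans (not_lt.1 hat)),
          max_eq_left ((min_le_right _ _).trans hta)]
  rw [key, abs_zero, zero_div]
end

section
/- Let n be a natural number, E = EuclideanSpace ℝ (Fin n), F : E → E, G : E → (E →L[ℝ] E), and z ∈ E. Assume F is slantly differentiable at z with slanting function G, i.e. ‖F(z + d) − F(z) − G(z + d) d‖ / ‖d‖ → 0 as d → 0 (d ≠ 0), and assume there exist L ≥ 0 and δ > 0 such that ‖G(x) − G(z)‖ ≤ L·‖x − z‖ (operator norm) for all x with ‖x − z‖ ≤ δ. Then the merit function Q(x) := (1/2)·‖F(x)‖² is Fréchet differentiable at z, with derivative the continuous linear map d ↦ ⟪F(z), G(z) d⟫; equivalently, Q has gradient (G(z))* (F(z)) at z, where (G(z))* denotes the adjoint of G(z). -/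
/-!
The Lipschitz bound gives `‖(G (z + d) - G z) d‖ ≤ L‖d‖² = o(‖d‖)`, so `G (z + d) d` may be
replaced by `G z d` in the slant differentiability condition: `F` itself is Fréchet differentiable
at `z` with derivative `G z` (`hasFDerivAt_of_slant`). The derivative of `(1/2)‖F‖²` is then given
by the chain rule, and the gradient is its Riesz representative.
-/

open Filter Topology

/-- A slanting function that is Lipschitz at `z` is a Fréchet derivative at `z`. -/
theorem hasFDerivAt_of_slant {E : Type*} [NormedAddCommGroup E] [NormedSpace ℝ E]
    {F : E → E} {G : E → (E →L[ℝ] E)} {z : E}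
    (hslant : Tendsto (fun d => ‖F (z + d) - F z - G (z + d) d‖ / ‖d‖) (𝓝[≠] 0) (𝓝 0))
    (hlip : ∃ L ≥ (0 : ℝ), ∃ δ > (0 : ℝ),
      ∀ x, ‖x - z‖ ≤ δ → ‖G x - G z‖ ≤ L * ‖x - z‖) :
    HasFDerivAt F (G z) z := by
  obtain ⟨L, hL, δ, hδ, hG⟩ := hlip
  rw [hasFDerivAt_iff_isLittleO_nhds_zero, Asymptotics.isLittleO_iff]
  intro ε hε
  have h1 := eventually_nhdsWithin_iff.1 (hslant.eventually (gt_mem_nhds (half_pos hε)))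
  -- On the ball of radius `ε / (2 (L + 1))` the Lipschitz error is at most `(ε / 2) ‖d‖`.
  have h2 := Metric.ball_mem_nhds (0 : E) (show 0 < min δ (ε / (2 * (L + 1))) by positivity)
  filter_upwards [h1, h2] with d hd1 hd2
  rcases eq_or_ne d 0 with rfl | hd0
  · simp
  have hdpos : 0 < ‖d‖ := norm_pos_iff.2 hd0
  rw [mem_ball_zero_iff, lt_min_iff, lt_div_iff₀ (by positivity)] at hd2
  have ha := (div_lt_iff₀ hdpos).1 (hd1 hd0)
  have hb := hG (z + d) (by simpa using hd2.1.le)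
  rw [add_sub_cancel_left] at hb
  have hc : ‖(G (z + d) - G z) d‖ ≤ L * ‖d‖ * ‖d‖ := ContinuousLinearMap.le_of_opNorm_le _ hb d
  have he : F (z + d) - F z - G z d
      = (F (z + d) - F z - G (z + d) d) + (G (z + d) - G z) d := by
    rw [sub_apply]
    abel
  rw [he]
  have hs : L * ‖d‖ ≤ ε / 2 := by nlinarith [hd2.2]
  have := mul_le_mul_of_nonneg_right hs hdpos.le
  linarith [norm_add_le (F (z + d) - F z - G (z + d) d) ((G (z + d) - G z) d)]

/-- Differentiability part of Lemma 3.3: if `F` is slantly differentiable at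
`z` with slanting function `G` (Definition 3.1) and `G` is locally Lipschitz at
`z` (Assumption 3.2), then the merit function `Q(x) = (1/2)‖F(x)‖²` is Fréchet
differentiable at `z` with derivative `d ↦ ⟪F z, G z d⟫`, i.e. gradient
`(G z)* (F z)`. -/
theorem merit_function_hasGradientAt
    (n : ℕ)
    (F : EuclideanSpace ℝ (Fin n) → EuclideanSpace ℝ (Fin n))
    (G : EuclideanSpace ℝ (Fin n) →
          (EuclideanSpace ℝ (Fin n) →L[ℝ] EuclideanSpace ℝ (Fin n)))
    (z : EuclideanSpace ℝ (Fin n))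
    (hslant : Tendsto (fun d => ‖F (z + d) - F z - G (z + d) d‖ / ‖d‖)
      (𝓝[≠] 0) (𝓝 0))
    (hlip : ∃ L ≥ (0 : ℝ), ∃ δ > (0 : ℝ),
      ∀ x, ‖x - z‖ ≤ δ → ‖G x - G z‖ ≤ L * ‖x - z‖) :
    HasFDerivAt (fun x => (1 / 2 : ℝ) * ‖F x‖ ^ 2)
      ((innerSL ℝ (F z)).comp (G z)) z ∧
    HasGradientAt (fun x => (1 / 2 : ℝ) * ‖F x‖ ^ 2)
      (ContinuousLinearMap.adjoint (G z) (F z)) z := by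
  have h : HasFDerivAt (fun x => (1 / 2 : ℝ) * ‖F x‖ ^ 2)
      ((innerSL ℝ (F z)).comp (G z)) z := by
    refine ((hasFDerivAt_of_slant hslant hlip).norm_sq.const_mul (1 / 2 : ℝ)).congr_fderiv ?_
    ext1 d
    simp
  refine ⟨h, hasGradientAt_iff_hasFDerivAt.2 (h.congr_fderiv ?_)⟩
  ext1 d
  simp [ContinuousLinearMap.adjoint_inner_left]
end

section
/- Let n be a natural number, E = EuclideanSpace ℝ (Fin n), F : E → E, G : E → (E →L[ℝ] E), and z ∈ E. Assume F is slantly differentiable at z with slanting function G, i.e. ‖F(z + d) − F(z) − G(z + d) d‖ / ‖d‖ → 0 as d → 0 (d ≠ 0); assume there exists M > 0 with ‖G(x)‖ ≤ M (operator norm) for all x ∈ E; and assume there exist L ≥ 0 and δ > 0 such that ‖G(x) − G(z)‖ ≤ L·‖x − z‖ for all x with ‖x − z‖ ≤ δ. Then the map x ↦ (G(x))* (F(x)) is continuous at z, where (G(x))* denotes the adjoint of G(x). -/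
open Filter Topology

/-!
Both factors of `x ↦ (G x)* (F x)` are continuous at `z`. For `G` this is the Lipschitz bound.
For `F`, slant differentiability and the uniform bound `M` on `‖G‖` give
`‖F x - F z‖ ≤ ‖x - z‖ + ‖G x (x - z)‖ ≤ (1 + M) ‖x - z‖` near `z`. The adjoint is an isometry and
evaluation of operators is jointly continuous, so the composite is continuous at `z`.
-/

/-- Continuity part of Lemma 3.3: under slant differentiability of `F` at `z`
(Definition 3.1), uniform boundedness of the slanting function `G`
(Lemma 3.2), and local Lipschitz continuity of `G` at `z` (Assumption 3.2),
the merit-function gradient `x ↦ (G x)* (F x)` is continuous at `z`. -/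
theorem merit_gradient_continuousAt
    (n : ℕ)
    (F : EuclideanSpace ℝ (Fin n) → EuclideanSpace ℝ (Fin n))
    (G : EuclideanSpace ℝ (Fin n) →
          (EuclideanSpace ℝ (Fin n) →L[ℝ] EuclideanSpace ℝ (Fin n)))
    (z : EuclideanSpace ℝ (Fin n))
    (hslant : Tendsto (fun d => ‖F (z + d) - F z - G (z + d) d‖ / ‖d‖)
      (𝓝[≠] 0) (𝓝 0))
    (hbound : ∃ M > (0 : ℝ), ∀ x, ‖G x‖ ≤ M)
    (hlip : ∃ L ≥ (0 : ℝ), ∃ δ > (0 : ℝ),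
      ∀ x, ‖x - z‖ ≤ δ → ‖G x - G z‖ ≤ L * ‖x - z‖) :
    ContinuousAt (fun x => ContinuousLinearMap.adjoint (G x) (F x)) z := by
  obtain ⟨M, -, hM⟩ := hbound
  obtain ⟨L, -, δ, hδ, hL⟩ := hlip
  have hG : ContinuousAt G z :=
    continuousAt_of_locally_lipschitz hδ L fun x hx => by
      rw [dist_eq_norm] at hx
      simpa only [dist_eq_norm] using hL x hx.le
  have hF : ContinuousAt F z := by
    -- Near `z` the slant remainder is at most `‖d‖`, so `F` is `(1 + M)`-Lipschitz at `z`.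
    have hev := hslant.eventually (gt_mem_nhds one_pos)
    rw [eventually_nhdsWithin_iff, Metric.eventually_nhds_iff] at hev
    obtain ⟨r, hr, hrem⟩ := hev
    refine continuousAt_of_locally_lipschitz hr (1 + M) fun x hx => ?_
    rcases eq_or_ne x z with rfl | hne
    · simp
    have hd : x - z ≠ 0 := sub_ne_zero.mpr hne
    have h1 := hrem (y := x - z) (by simpa [dist_eq_norm] using hx) hd
    rw [add_sub_cancel, div_lt_one (norm_pos_iff.mpr hd)] at h1
    have h2 : ‖G x (x - z)‖ ≤ M * ‖x - z‖ := (G x).le_of_opNorm_le (hM x) _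
    have h3 := norm_add_le (F x - F z - G x (x - z)) (G x (x - z))
    rw [sub_add_cancel] at h3
    rw [dist_eq_norm, dist_eq_norm]
    linarith
  exact (ContinuousLinearMap.adjoint.continuous.continuousAt.comp hG).clm_apply hF
end

section
/- Let n be a natural number, E = EuclideanSpace ℝ (Fin n), A : E →L[ℝ] E a continuous linear map, v, d ∈ E, and η ∈ [0, 1). If ‖v + A d‖ ≤ η·‖v‖ and A* v = 0 (where A* is the adjoint of A), then v = 0. -/
/-- Lemma 4.1 in abstract form: if the inexact Newton residual condition
`‖v + A d‖ ≤ η ‖v‖` holds with `η ∈ [0,1)` and the merit-function gradient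
`A* v` vanishes, then `v = 0`. -/
theorem residual_condition_gradient_zero_imp_zero
    (n : ℕ)
    (A : EuclideanSpace ℝ (Fin n) →L[ℝ] EuclideanSpace ℝ (Fin n))
    (v d : EuclideanSpace ℝ (Fin n)) (η : ℝ)
    (hη0 : 0 ≤ η) (hη1 : η < 1)
    (hres : ‖v + A d‖ ≤ η * ‖v‖)
    (hgrad : ContinuousLinearMap.adjoint A v = 0) :
    v = 0 := by
  have horth : inner ℝ v (A d) = 0 := by
    rw [← ContinuousLinearMap.adjoint_inner_left, hgrad, inner_zero_left]
  -- Since `v ⟂ A d`, Cauchy–Schwarz gives `‖v‖² = ⟪v, v + A d⟫ ≤ ‖v‖ ‖v + A d‖ ≤ η ‖v‖²`.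
  have hcs : ‖v‖ * ‖v‖ ≤ ‖v‖ * ‖v + A d‖ := by
    have h := real_inner_le_norm v (v + A d)
    rwa [inner_add_right, horth, add_zero, real_inner_self_eq_norm_mul_norm] at h
  by_contra hv
  have hpos : 0 < ‖v‖ := norm_pos_iff.mpr hv
  have hle : ‖v‖ ≤ ‖v + A d‖ := le_of_mul_le_mul_left hcs hpos
  have hlt : η * ‖v‖ < ‖v‖ := mul_lt_of_lt_one_left hpos hη1
  linarith
end

section
/- Let n be a natural number, E = EuclideanSpace ℝ (Fin n), F : E → E, z, z* ∈ E with F(z*) = 0, M > 0, and A : E →L[ℝ] E invertible with ‖A‖ ≤ M and ‖A⁻¹‖ ≤ M (operator norms). Let ε ≥ 0 satisfy ‖F(z) − A (z − z*)‖ ≤ (ε/M)·‖z − z*‖, and let d ∈ E and η ≥ 0 satisfy ‖F(z) + A d‖ ≤ η·‖F(z)‖. Then ‖z + d − z*‖ ≤ (ε + η·M² + η·ε)·‖z − z*‖. -/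
/-!
The new error `z + d - z*` equals `A⁻¹ ((F z + A d) - (F z - A (z - z*)))`, so its norm is at most
`M` times the sum of the Newton residual and the linearization error. The residual is at most
`η ‖F z‖`, and the linearization bound together with `‖A‖ ≤ M` gives
`‖F z‖ ≤ (ε / M + M) ‖z - z*‖`.
-/

/-- One-step contraction estimate (4.33)–(4.34) in the proof of Theorem 4.3:
if `F z* = 0`, the slanting value `A` satisfies `‖A‖ ≤ M`, `‖A⁻¹‖ ≤ M`, the
slant-differentiability bound `‖F z − A (z − z*)‖ ≤ (ε/M)‖z − z*‖` holds, and
`d` is an inexact Newton direction with `‖F z + A d‖ ≤ η ‖F z‖`, then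
`‖z + d − z*‖ ≤ (ε + η M² + η ε)‖z − z*‖`. -/
theorem inexact_newton_one_step_contraction
    (n : ℕ)
    (F : EuclideanSpace ℝ (Fin n) → EuclideanSpace ℝ (Fin n))
    (z zstar : EuclideanSpace ℝ (Fin n)) (hFstar : F zstar = 0)
    (M : ℝ) (hM : 0 < M)
    (A : EuclideanSpace ℝ (Fin n) ≃L[ℝ] EuclideanSpace ℝ (Fin n))
    (hA : ‖(A : EuclideanSpace ℝ (Fin n) →L[ℝ] EuclideanSpace ℝ (Fin n))‖ ≤ M)
    (hAinv : ‖(A.symm :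
      EuclideanSpace ℝ (Fin n) →L[ℝ] EuclideanSpace ℝ (Fin n))‖ ≤ M)
    (ε : ℝ) (hε : 0 ≤ ε)
    (hslant : ‖F z - A (z - zstar)‖ ≤ ε / M * ‖z - zstar‖)
    (d : EuclideanSpace ℝ (Fin n)) (η : ℝ) (hη : 0 ≤ η)
    (hres : ‖F z + A d‖ ≤ η * ‖F z‖) :
    ‖z + d - zstar‖ ≤ (ε + η * M ^ 2 + η * ε) * ‖z - zstar‖ := by
  have hAx : ‖A (z - zstar)‖ ≤ M * ‖z - zstar‖ :=
    (A : EuclideanSpace ℝ (Fin n) →L[ℝ] EuclideanSpace ℝ (Fin n)).le_of_opNorm_le hA _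
  have hF : ‖F z‖ ≤ (ε / M + M) * ‖z - zstar‖ := by
    calc ‖F z‖ = ‖(F z - A (z - zstar)) + A (z - zstar)‖ := by rw [sub_add_cancel]
      _ ≤ ‖F z - A (z - zstar)‖ + ‖A (z - zstar)‖ := norm_add_le _ _
      _ ≤ ε / M * ‖z - zstar‖ + M * ‖z - zstar‖ := add_le_add hslant hAx
      _ = (ε / M + M) * ‖z - zstar‖ := by ring
  -- The new error is `A⁻¹` applied to the Newton residual minus the linearization error.
  have hkey : z + d - zstar = A.symm ((F z + A d) - (F z - A (z - zstar))) := by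
    rw [A.eq_symm_apply, show z + d - zstar = d + (z - zstar) by abel, map_add]
    abel
  calc ‖z + d - zstar‖ = ‖A.symm ((F z + A d) - (F z - A (z - zstar)))‖ := by rw [← hkey]
    _ ≤ M * ‖(F z + A d) - (F z - A (z - zstar))‖ :=
      (A.symm : EuclideanSpace ℝ (Fin n) →L[ℝ] EuclideanSpace ℝ (Fin n)).le_of_opNorm_le hAinv _
    _ ≤ M * (‖F z + A d‖ + ‖F z - A (z - zstar)‖) := by gcongr; exact norm_sub_le _ _
    _ ≤ M * (η * ((ε / M + M) * ‖z - zstar‖) + ε / M * ‖z - zstar‖) := by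
      gcongr
      exact hres.trans (by gcongr)
    _ = (ε + η * M ^ 2 + η * ε) * ‖z - zstar‖ := by field_simp; ring
end

section
/- Let n be a natural number, E = EuclideanSpace ℝ (Fin n), F : E → E, z* ∈ E with F(z*) = 0, and M > 0. Let (z_k), (d_k) be sequences in E, and (η_k), (ε_k) nonnegative real sequences with ε_k → 0, such that for every k: z_k ≠ z*; there is an invertible A_k : E →L[ℝ] E with ‖A_k‖ ≤ M and ‖A_k⁻¹‖ ≤ M; ‖F(z_k) − A_k (z_k − z*)‖ ≤ (ε_k/M)·‖z_k − z*‖; ‖F(z_k) + A_k d_k‖ ≤ η_k·‖F(z_k)‖ with η_k ≤ ε_k/M²; and z_{k+1} = z_k + d_k. Then ‖z_{k+1} − z*‖ / ‖z_k − z*‖ → 0 as k → ∞, i.e. the sequence (z_k) converges to z* superlinearly. -/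
/-!
Write `e_k = z_k - z*`. Since `z_{k+1} = z_k + d_k`,
`A_k e_{k+1} = (F(z_k) + A_k d_k) - (F(z_k) - A_k e_k)`: the linear residual minus the slant
differentiability error. The second term is at most `(ε_k / M) ‖e_k‖`; the first is at most
`η_k ‖F(z_k)‖`, where `‖F(z_k)‖ ≤ (ε_k / M + M) ‖e_k‖`. Applying `A_k⁻¹`, of norm at most `M`,
gives `‖e_{k+1}‖ ≤ ε_k (2 + ε_k / M²) ‖e_k‖`, and the factor tends to `0`.
-/

open Filter Topology

/-- Theorem 4.3 (local superlinear convergence of the inexact semismooth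
Newton method with unit steps): if `F z* = 0`, each slanting value `A_k` is
invertible with `‖A_k‖ ≤ M`, `‖A_k⁻¹‖ ≤ M`, slant differentiability gives
`‖F(z_k) − A_k (z_k − z*)‖ ≤ (ε_k/M)‖z_k − z*‖` with `ε_k → 0`, the residual
condition `‖F(z_k) + A_k d_k‖ ≤ η_k ‖F(z_k)‖` holds with `η_k ≤ ε_k/M²`, and
`z_{k+1} = z_k + d_k`, then `‖z_{k+1} − z*‖/‖z_k − z*‖ → 0`. -/
theorem inexact_newton_superlinear_convergence
    (n : ℕ)
    (F : EuclideanSpace ℝ (Fin n) → EuclideanSpace ℝ (Fin n))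
    (zstar : EuclideanSpace ℝ (Fin n)) (hFstar : F zstar = 0)
    (M : ℝ) (hM : 0 < M)
    (z d : ℕ → EuclideanSpace ℝ (Fin n)) (η ε : ℕ → ℝ)
    (hη : ∀ k, 0 ≤ η k) (hε : ∀ k, 0 ≤ ε k)
    (hε0 : Tendsto ε atTop (𝓝 0))
    (hz : ∀ k, z k ≠ zstar)
    (hk : ∀ k, ∃ A : EuclideanSpace ℝ (Fin n) ≃L[ℝ] EuclideanSpace ℝ (Fin n),
      ‖(A : EuclideanSpace ℝ (Fin n) →L[ℝ] EuclideanSpace ℝ (Fin n))‖ ≤ M ∧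
      ‖(A.symm : EuclideanSpace ℝ (Fin n) →L[ℝ] EuclideanSpace ℝ (Fin n))‖ ≤ M ∧
      ‖F (z k) - A (z k - zstar)‖ ≤ ε k / M * ‖z k - zstar‖ ∧
      ‖F (z k) + A (d k)‖ ≤ η k * ‖F (z k)‖)
    (hηε : ∀ k, η k ≤ ε k / M ^ 2)
    (hstep : ∀ k, z (k + 1) = z k + d k) :
    Tendsto (fun k => ‖z (k + 1) - zstar‖ / ‖z k - zstar‖) atTop (𝓝 0) := by
  have hbound : ∀ k, ‖z (k + 1) - zstar‖ / ‖z k - zstar‖ ≤ ε k * (2 + ε k / M ^ 2) := by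
    intro k
    obtain ⟨A, hA, hAinv, hslant, hres⟩ := hk k
    have hpos : 0 < ‖z k - zstar‖ := norm_pos_iff.mpr (sub_ne_zero.mpr (hz k))
    rw [div_le_iff₀ hpos]
    have hAe : ‖A (z k - zstar)‖ ≤ M * ‖z k - zstar‖ :=
      (A : EuclideanSpace ℝ (Fin n) →L[ℝ] EuclideanSpace ℝ (Fin n)).le_of_opNorm_le hA _
    have hF : ‖F (z k)‖ ≤ (ε k / M + M) * ‖z k - zstar‖ := by
      have h := norm_add_le (F (z k) - A (z k - zstar)) (A (z k - zstar))
      rw [sub_add_cancel] at h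
      linarith
    have hsplit : A (z (k + 1) - zstar) =
        (F (z k) + A (d k)) - (F (z k) - A (z k - zstar)) := by
      rw [hstep k, add_sub_right_comm, map_add]
      abel
    have hresF : η k * ‖F (z k)‖ ≤ ε k / M ^ 2 * ((ε k / M + M) * ‖z k - zstar‖) :=
      mul_le_mul (hηε k) hF (norm_nonneg _) ((hη k).trans (hηε k))
    have hAe' : ‖A (z (k + 1) - zstar)‖ ≤
        ε k / M ^ 2 * ((ε k / M + M) * ‖z k - zstar‖) + ε k / M * ‖z k - zstar‖ := by
      rw [hsplit]
      exact (norm_sub_le _ _).trans (add_le_add (hres.trans hresF) hslant)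
    have hinv : ‖z (k + 1) - zstar‖ ≤ M * ‖A (z (k + 1) - zstar)‖ := by
      simpa using
        (A.symm : EuclideanSpace ℝ (Fin n) →L[ℝ] EuclideanSpace ℝ (Fin n)).le_of_opNorm_le
          hAinv (A (z (k + 1) - zstar))
    calc ‖z (k + 1) - zstar‖
        ≤ M * (ε k / M ^ 2 * ((ε k / M + M) * ‖z k - zstar‖) + ε k / M * ‖z k - zstar‖) :=
          hinv.trans (mul_le_mul_of_nonneg_left hAe' hM.le)
      _ = ε k * (2 + ε k / M ^ 2) * ‖z k - zstar‖ := by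
          field_simp
          ring
  have hlim : Tendsto (fun k => ε k * (2 + ε k / M ^ 2)) atTop (𝓝 0) := by
    simpa using hε0.mul ((hε0.div_const (M ^ 2)).const_add 2)
  exact squeeze_zero (fun k => by positivity) hbound hlim
end
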